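/- arXiv:2007.01024 — 2 statements merged into one kernel-verified Lean document; each statement's English description precedes it below -/
import Mathlib

section
/- Let β ∈ ℝ, let r : I → (0,∞) be C² on an interval I, and let γ(φ) = (r(φ)cos φ, r(φ)sin φ). Then γ has vanishing geodesic curvature with respect to the singular flat metric g_β = |z|^{2β}|dz|² on ℂ∖{0}, i.e. k(φ) = β ⟨γ(φ), ξ(φ)⟩/|γ(φ)|² for all φ ∈ I, if and only if r satisfies the ODE r r″ − (β+2)(r′)² − (β+1) r² = 0 on I. -/
/-!
In the rotating frame `e^{iφ}` the curve `γ = r e^{iφ}` has `γ' = (r' + i r) e^{iφ}` and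
`γ'' = (r'' - r + 2 i r') e^{iφ}`.  Rotations preserve `det` and the inner product, so
`det(γ', γ'') = 2 r'² + r² - r r''` and `⟨γ, Jγ'⟩ = -r²`, while `|γ'|² = r'² + r²`.  Hence
`k - β⟨γ, ξ⟩/|γ|² = -(r r'' - (β+2) r'² - (β+1) r²) / |γ'|³` (`geodesicDefect`), and `|γ'| > 0`
because `r > 0`, so the two sides vanish together at every point.
-/

open Set

/-- The Euclidean inner product on `ℂ ≅ ℝ²`. -/
noncomputable def edot (z w : ℂ) : ℝ := z.re * w.re + z.im * w.im

/-- The determinant `det(z, w)` of two vectors of `ℂ ≅ ℝ²`. -/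
noncomputable def edet (z w : ℂ) : ℝ := z.re * w.im - z.im * w.re

/-- The signed Euclidean curvature `k = det(γ', γ'')/|γ'|³` of a plane curve. -/
noncomputable def curv (γ : ℝ → ℂ) (s : ℝ) : ℝ :=
  edet (deriv γ s) (deriv (deriv γ) s) / ‖deriv γ s‖ ^ 3

/-- The unit normal of a plane curve: rotation by `+π/2` (multiplication by `I`)
of the unit tangent `γ'/|γ'|`. -/
noncomputable def unitNormal (γ : ℝ → ℂ) (s : ℝ) : ℂ :=
  Complex.I * (‖deriv γ s‖⁻¹ • deriv γ s)

/-- The polar curve `φ ↦ (r(φ)cos φ, r(φ)sin φ) = r(φ)e^{iφ}`. -/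
noncomputable def polarCurve (r : ℝ → ℝ) (φ : ℝ) : ℂ :=
  (r φ : ℂ) * Complex.exp (Complex.I * (φ : ℂ))

lemma edet_mul_right (z w u : ℂ) : edet (z * u) (w * u) = edet z w * ‖u‖ ^ 2 := by
  rw [Complex.sq_norm, Complex.normSq_apply]
  simp only [edet, Complex.mul_re, Complex.mul_im]
  ring

lemma edot_mul_right (z w u : ℂ) : edot (z * u) (w * u) = edot z w * ‖u‖ ^ 2 := by
  rw [Complex.sq_norm, Complex.normSq_apply]
  simp only [edot, Complex.mul_re, Complex.mul_im]
  ring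

lemma norm_exp_I_mul (φ : ℝ) : ‖Complex.exp (Complex.I * (φ : ℂ))‖ = 1 := by
  rw [mul_comm, Complex.norm_exp_ofReal_mul_I]

/-- Product rule in the rotating frame: the derivative of `f e^{iφ}` is `(f' + i f) e^{iφ}`. -/
lemma hasDerivAt_mul_exp {f : ℝ → ℂ} {f' : ℂ} {φ : ℝ} (hf : HasDerivAt f f' φ) :
    HasDerivAt (fun t : ℝ => f t * Complex.exp (Complex.I * (t : ℂ)))
      ((f' + Complex.I * f φ) * Complex.exp (Complex.I * (φ : ℂ))) φ := by
  have he : HasDerivAt (fun t : ℝ => Complex.exp (Complex.I * (t : ℂ)))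
      (Complex.exp (Complex.I * (φ : ℂ)) * (Complex.I * 1)) φ :=
    ((Complex.ofRealCLM.hasDerivAt (x := φ)).const_mul Complex.I).cexp
  refine (hf.mul he).congr_deriv ?_
  ring

section PolarCurve

variable {I : Set ℝ} {r : ℝ → ℝ} {φ : ℝ}

lemma hasDerivAt_radius (hI : IsOpen I) (hr : ContDiffOn ℝ 2 r I) (hφ : φ ∈ I) :
    HasDerivAt r (deriv r φ) φ :=
  ((hr.differentiableOn (by norm_num)).differentiableAt (hI.mem_nhds hφ)).hasDerivAt

lemma hasDerivAt_deriv_radius (hI : IsOpen I) (hr : ContDiffOn ℝ 2 r I) (hφ : φ ∈ I) :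
    HasDerivAt (deriv r) (deriv (deriv r) φ) φ := by
  have h : ContDiffOn ℝ 1 (deriv r) I := hr.deriv_of_isOpen hI (by norm_num)
  exact ((h.differentiableOn (by norm_num)).differentiableAt (hI.mem_nhds hφ)).hasDerivAt

lemma deriv_polarCurve (hI : IsOpen I) (hr : ContDiffOn ℝ 2 r I) (hφ : φ ∈ I) :
    deriv (polarCurve r) φ =
      (((deriv r φ : ℝ) : ℂ) + Complex.I * (r φ : ℂ)) * Complex.exp (Complex.I * (φ : ℂ)) :=
  (hasDerivAt_mul_exp (hasDerivAt_radius hI hr hφ).ofReal_comp).deriv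

lemma deriv_deriv_polarCurve (hI : IsOpen I) (hr : ContDiffOn ℝ 2 r I) (hφ : φ ∈ I) :
    deriv (deriv (polarCurve r)) φ =
      (((deriv (deriv r) φ : ℝ) : ℂ) - (r φ : ℂ) + 2 * Complex.I * ((deriv r φ : ℝ) : ℂ))
        * Complex.exp (Complex.I * (φ : ℂ)) := by
  -- The formula for `γ'` holds near `φ` since `I` is open, so it may be differentiated.
  have hev : deriv (polarCurve r) =ᶠ[nhds φ] fun t : ℝ =>
      (((deriv r t : ℝ) : ℂ) + Complex.I * (r t : ℂ)) * Complex.exp (Complex.I * (t : ℂ)) := by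
    filter_upwards [hI.mem_nhds hφ] with t ht
    exact deriv_polarCurve hI hr ht
  have hf : HasDerivAt (fun t : ℝ => ((deriv r t : ℝ) : ℂ) + Complex.I * (r t : ℂ))
      (((deriv (deriv r) φ : ℝ) : ℂ) + Complex.I * ((deriv r φ : ℝ) : ℂ)) φ :=
    (hasDerivAt_deriv_radius hI hr hφ).ofReal_comp.add
      ((hasDerivAt_radius hI hr hφ).ofReal_comp.const_mul Complex.I)
  rw [hev.deriv_eq, (hasDerivAt_mul_exp hf).deriv]
  linear_combination (r φ : ℂ) * Complex.exp (Complex.I * (φ : ℂ)) * Complex.I_sq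

lemma sq_norm_deriv_polarCurve (hI : IsOpen I) (hr : ContDiffOn ℝ 2 r I) (hφ : φ ∈ I) :
    ‖deriv (polarCurve r) φ‖ ^ 2 = deriv r φ ^ 2 + r φ ^ 2 := by
  rw [deriv_polarCurve hI hr hφ, norm_mul, norm_exp_I_mul, mul_one, Complex.sq_norm,
    Complex.normSq_apply]
  simp
  ring

/-- A polar curve with positive radius is regular. -/
lemma norm_deriv_polarCurve_pos (hI : IsOpen I) (hr : ContDiffOn ℝ 2 r I)
    (hrpos : ∀ φ ∈ I, 0 < r φ) (hφ : φ ∈ I) : 0 < ‖deriv (polarCurve r) φ‖ := by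
  have h := sq_norm_deriv_polarCurve hI hr hφ
  have := hrpos φ hφ
  refine (norm_nonneg _).lt_of_ne' fun h0 => ?_
  rw [h0] at h
  nlinarith [sq_nonneg (deriv r φ)]

lemma edet_deriv_polarCurve (hI : IsOpen I) (hr : ContDiffOn ℝ 2 r I) (hφ : φ ∈ I) :
    edet (deriv (polarCurve r) φ) (deriv (deriv (polarCurve r)) φ) =
      2 * deriv r φ ^ 2 + r φ ^ 2 - r φ * deriv (deriv r) φ := by
  rw [deriv_polarCurve hI hr hφ, deriv_deriv_polarCurve hI hr hφ, edet_mul_right, norm_exp_I_mul]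
  simp [edet]
  ring

lemma edot_unitNormal_polarCurve (hI : IsOpen I) (hr : ContDiffOn ℝ 2 r I) (hφ : φ ∈ I) :
    edot (polarCurve r φ) (unitNormal (polarCurve r) φ) =
      -r φ ^ 2 / ‖deriv (polarCurve r) φ‖ := by
  have hξ : unitNormal (polarCurve r) φ =
      (((‖deriv (polarCurve r) φ‖⁻¹ : ℝ) : ℂ) *
        (Complex.I * (((deriv r φ : ℝ) : ℂ) + Complex.I * (r φ : ℂ)))) *
          Complex.exp (Complex.I * (φ : ℂ)) := by
    rw [unitNormal, Complex.real_smul]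
    generalize ‖deriv (polarCurve r) φ‖ = v
    rw [deriv_polarCurve hI hr hφ]
    ring
  rw [hξ, polarCurve, edot_mul_right, norm_exp_I_mul]
  generalize ‖deriv (polarCurve r) φ‖ = v
  simp only [edot, Complex.re_ofReal_mul, Complex.im_ofReal_mul, Complex.ofReal_re,
    Complex.ofReal_im]
  simp
  ring

/-- The Euclidean form `k - βϱ` of the geodesic curvature of a polar curve, as minus the left side
of the ODE divided by `|γ'|³`. -/
lemma geodesicDefect (β : ℝ) (hI : IsOpen I) (hr : ContDiffOn ℝ 2 r I)
    (hrpos : ∀ φ ∈ I, 0 < r φ) (hφ : φ ∈ I) :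
    curv (polarCurve r) φ
        - β * edot (polarCurve r φ) (unitNormal (polarCurve r) φ) / ‖polarCurve r φ‖ ^ 2 =
      -(r φ * deriv (deriv r) φ - (β + 2) * (deriv r φ) ^ 2 - (β + 1) * (r φ) ^ 2)
        / ‖deriv (polarCurve r) φ‖ ^ 3 := by
  have hr0 := (hrpos φ hφ).ne'
  have hv := (norm_deriv_polarCurve_pos hI hr hrpos hφ).ne'
  have hv2 := sq_norm_deriv_polarCurve hI hr hφ
  have hγ : ‖polarCurve r φ‖ ^ 2 = r φ ^ 2 := by
    rw [polarCurve, norm_mul, norm_exp_I_mul, mul_one, Complex.norm_real, Real.norm_eq_abs, sq_abs]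
  rw [curv, edet_deriv_polarCurve hI hr hφ, edot_unitNormal_polarCurve hI hr hφ, hγ]
  generalize ‖deriv (polarCurve r) φ‖ = v at hv hv2 ⊢
  field_simp
  linear_combination β * hv2

end PolarCurve

/-- Let `β ∈ ℝ`, `r : I → (0,∞)` of class `C²`, `γ(φ) = (r(φ)cos φ, r(φ)sin φ)`.
Then `γ` has vanishing geodesic curvature with respect to the singular flat metric
`|z|^{2β}|dz|²`, i.e. `k = β⟨γ,ξ⟩/|γ|²` on `I`, if and only if
`r r'' − (β+2)(r')² − (β+1)r² = 0` on `I`. -/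
theorem stmt5 (β : ℝ) (I : Set ℝ) (hI : IsOpen I) (r : ℝ → ℝ)
    (hr : ContDiffOn ℝ 2 r I) (hrpos : ∀ φ ∈ I, 0 < r φ) :
    (∀ φ ∈ I,
        curv (polarCurve r) φ
          = β * edot (polarCurve r φ) (unitNormal (polarCurve r) φ)
              / ‖polarCurve r φ‖ ^ 2) ↔
    (∀ φ ∈ I,
        r φ * deriv (deriv r) φ - (β + 2) * (deriv r φ) ^ 2 - (β + 1) * (r φ) ^ 2 = 0) := by
  refine forall₂_congr fun φ hφ => ?_
  rw [← sub_eq_zero, geodesicDefect β hI hr hrpos hφ, div_eq_zero_iff, neg_eq_zero]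
  have hv := norm_deriv_polarCurve_pos hI hr hrpos hφ
  exact or_iff_left (pow_ne_zero 3 hv.ne')
end

section
/- Let γ : (0, π) → ℝ² be the tear drop curve γ(s) = (1/(1 + cos²s)) · (−sin s, sin s cos s). Then for every s ∈ (0, π) the signed Euclidean curvature of γ satisfies k(s) = 3|γ(s)| and ⟨γ(s), ξ(s)⟩/|γ(s)|² = −|γ(s)|, i.e. k = 3|γ| = −3ϱ. Consequently, for every β ∈ (−3, 0), the geodesic curvature of γ with respect to the metric |z|^{2β}|dz|², namely |γ|^{−β}(k − βϱ) = |γ|^{1−β}(β + 3), is positive, so the tear drop curve is convex with respect to both the Euclidean metric and the metric |z|^{2β}|dz|². -/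
/-! Writing `c = cos s` and `D = 1 + c²`, the coordinates of the tear drop curve are
`-sin s / D` and `sin s · c / D`, and its derivative is `((c³ - 3c)/D², (3c² - 1)/D²)`.
Since `(c³ - 3c)² + (3c² - 1)² = (1 + c²)³`, this gives `|γ'| = 1/√D`, while `|γ| = sin s/√D`.
Differentiating once more, `det(γ', γ'') = 3 sin s / D²` and `⟨γ, Jγ'⟩ = -sin³ s / D²`.
Dividing by `|γ'|³`, respectively by `|γ'||γ|²`, yields `k = 3|γ|` and `ϱ = -|γ|`, and the
statement on the geodesic curvature is then immediate from `|γ| > 0` and `β + 3 > 0`. -/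

open Set Real

/-- The tear drop curve `γ(s) = (1/(1+cos²s))·(−sin s, sin s cos s)`. -/
noncomputable def tearDrop (s : ℝ) : ℂ :=
  (1 / (1 + Real.cos s ^ 2)) •
    (((-Real.sin s : ℝ) : ℂ) + ((Real.sin s * Real.cos s : ℝ) : ℂ) * Complex.I)

theorem hasDerivAt_complex_mk {x y : ℝ → ℝ} {x' y' s : ℝ}
    (hx : HasDerivAt x x' s) (hy : HasDerivAt y y' s) :
    HasDerivAt (fun t => (⟨x t, y t⟩ : ℂ)) ⟨x', y'⟩ s := by
  have h := hx.ofReal_comp.add (hy.ofReal_comp.mul_const Complex.I)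
  rw [← Complex.mk_eq_add_mul_I] at h
  refine h.congr_of_eventuallyEq (Filter.Eventually.of_forall fun t => ?_)
  simp [Complex.mk_eq_add_mul_I]

theorem tearDrop_eq : tearDrop = fun s =>
    (⟨-sin s / (1 + cos s ^ 2), sin s * cos s / (1 + cos s ^ 2)⟩ : ℂ) := by
  funext s
  unfold tearDrop
  rw [← Complex.mk_eq_add_mul_I]
  apply Complex.ext
  · simp only [Complex.smul_re, smul_eq_mul]; ring
  · simp only [Complex.smul_im, smul_eq_mul]; ring

theorem hasDerivAt_one_add_cos_sq (s : ℝ) :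
    HasDerivAt (fun t => 1 + cos t ^ 2) (-(2 * cos s * sin s)) s := by
  have h := ((hasDerivAt_cos s).pow 2).const_add 1
  refine h.congr_deriv ?_
  push_cast
  ring

theorem deriv_tearDrop : deriv tearDrop = fun s =>
    (⟨(cos s ^ 3 - 3 * cos s) / (1 + cos s ^ 2) ^ 2,
      (3 * cos s ^ 2 - 1) / (1 + cos s ^ 2) ^ 2⟩ : ℂ) := by
  funext s
  have hD : 1 + cos s ^ 2 ≠ 0 := by positivity
  have hs : sin s ^ 2 = 1 - cos s ^ 2 := sin_sq s
  have hx := (hasDerivAt_sin s).neg.div (hasDerivAt_one_add_cos_sq s) hD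
  have hy := ((hasDerivAt_sin s).mul (hasDerivAt_cos s)).div (hasDerivAt_one_add_cos_sq s) hD
  rw [tearDrop_eq]
  refine (hasDerivAt_complex_mk hx hy).deriv.trans ?_
  apply Complex.ext
  · dsimp only
    congr 1
    simp only [Pi.neg_apply]
    linear_combination (-2 * cos s) * hs
  · dsimp only
    congr 1
    simp only [Pi.mul_apply]
    linear_combination (cos s ^ 2 - 1) * hs

theorem deriv_deriv_tearDrop (s : ℝ) : deriv (deriv tearDrop) s =
    (⟨sin s * (cos s ^ 4 - 12 * cos s ^ 2 + 3) / (1 + cos s ^ 2) ^ 3,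
      sin s * cos s * (6 * cos s ^ 2 - 10) / (1 + cos s ^ 2) ^ 3⟩ : ℂ) := by
  have hD : 1 + cos s ^ 2 ≠ 0 := by positivity
  have hc := hasDerivAt_cos s
  have hD2 := (hasDerivAt_one_add_cos_sq s).pow 2
  have hx := ((hc.pow 3).sub (hc.const_mul 3)).div hD2 (pow_ne_zero 2 hD)
  have hy := (((hc.pow 2).const_mul 3).sub_const 1).div hD2 (pow_ne_zero 2 hD)
  rw [deriv_tearDrop]
  refine (hasDerivAt_complex_mk hx hy).deriv.trans ?_
  apply Complex.ext
  · simp only [Pi.pow_apply, Pi.sub_apply]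
    push_cast
    field_simp
    ring
  · simp only [Pi.pow_apply]
    push_cast
    field_simp
    ring

theorem norm_tearDrop {s : ℝ} (hs : 0 < sin s) :
    ‖tearDrop s‖ = sin s / √(1 + cos s ^ 2) := by
  have hD : 0 < 1 + cos s ^ 2 := by positivity
  rw [← sq_eq_sq₀ (norm_nonneg _) (by positivity), ← Complex.normSq_eq_norm_sq,
    div_pow, sq_sqrt hD.le, tearDrop_eq, Complex.normSq_mk]
  field_simp

theorem norm_deriv_tearDrop (s : ℝ) :
    ‖deriv tearDrop s‖ = 1 / √(1 + cos s ^ 2) := by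
  have hD : 0 < 1 + cos s ^ 2 := by positivity
  rw [← sq_eq_sq₀ (norm_nonneg _) (by positivity), ← Complex.normSq_eq_norm_sq,
    div_pow, sq_sqrt hD.le, deriv_tearDrop, Complex.normSq_mk]
  field_simp
  ring

theorem edet_deriv_tearDrop (s : ℝ) :
    edet (deriv tearDrop s) (deriv (deriv tearDrop) s) = 3 * sin s / (1 + cos s ^ 2) ^ 2 := by
  have hD : 1 + cos s ^ 2 ≠ 0 := by positivity
  rw [deriv_deriv_tearDrop, deriv_tearDrop, edet]
  dsimp only
  field_simp
  ring

theorem curv_tearDrop {s : ℝ} (hs : 0 < sin s) : curv tearDrop s = 3 * ‖tearDrop s‖ := by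
  have hD : 0 < 1 + cos s ^ 2 := by positivity
  have hr : 0 < √(1 + cos s ^ 2) := sqrt_pos.2 hD
  have hsq : √(1 + cos s ^ 2) ^ 2 = 1 + cos s ^ 2 := sq_sqrt hD.le
  rw [curv, edet_deriv_tearDrop, norm_deriv_tearDrop, norm_tearDrop hs, ← hsq, sqrt_sq hr.le]
  field_simp

theorem edot_I_mul_deriv_tearDrop (s : ℝ) :
    edot (tearDrop s) (Complex.I * deriv tearDrop s) = -sin s ^ 3 / (1 + cos s ^ 2) ^ 2 := by
  have hD : 1 + cos s ^ 2 ≠ 0 := by positivity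
  rw [deriv_tearDrop, tearDrop_eq, edot]
  simp only [Complex.mul_re, Complex.mul_im, Complex.I_re, Complex.I_im]
  field_simp
  linear_combination (sin s * (1 + cos s ^ 2)) * sin_sq s

/-- The support-function quotient `ϱ = ⟨γ, ξ⟩/|γ|²` of the tear drop curve. -/
theorem rho_tearDrop {s : ℝ} (hs : 0 < sin s) :
    edot (tearDrop s) (unitNormal tearDrop s) / ‖tearDrop s‖ ^ 2 = -‖tearDrop s‖ := by
  have hD : 0 < 1 + cos s ^ 2 := by positivity
  have hr : 0 < √(1 + cos s ^ 2) := sqrt_pos.2 hD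
  have hsq : √(1 + cos s ^ 2) ^ 2 = 1 + cos s ^ 2 := sq_sqrt hD.le
  have h : edot (tearDrop s) (unitNormal tearDrop s) =
      ‖deriv tearDrop s‖⁻¹ * edot (tearDrop s) (Complex.I * deriv tearDrop s) := by
    rw [unitNormal, mul_smul_comm]
    simp only [edot, Complex.smul_re, Complex.smul_im, smul_eq_mul]
    ring
  rw [h, edot_I_mul_deriv_tearDrop, norm_deriv_tearDrop, norm_tearDrop hs, ← hsq, sqrt_sq hr.le]
  field_simp

/-- For the tear drop curve on `(0,π)` one has `k = 3|γ|` and `ϱ = ⟨γ,ξ⟩/|γ|² = −|γ|`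
(so `k = 3|γ| = −3ϱ`); consequently for every `β ∈ (−3,0)` its geodesic curvature
`|γ|^{−β}(k − βϱ) = |γ|^{1−β}(β+3)` with respect to `|z|^{2β}|dz|²` is positive, i.e.
the tear drop curve is convex for the Euclidean metric and for every such singular
metric. -/
theorem stmt12 :
    ∀ s ∈ Ioo 0 π,
      deriv tearDrop s ≠ 0 ∧
      curv tearDrop s = 3 * ‖tearDrop s‖ ∧
      edot (tearDrop s) (unitNormal tearDrop s) / ‖tearDrop s‖ ^ 2 = -‖tearDrop s‖ ∧
      (∀ β ∈ Ioo (-3:ℝ) 0,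
        0 < ‖tearDrop s‖ ^ (-β) *
            (curv tearDrop s -
              β * (edot (tearDrop s) (unitNormal tearDrop s) / ‖tearDrop s‖ ^ 2)) ∧
        ‖tearDrop s‖ ^ (-β) *
            (curv tearDrop s -
              β * (edot (tearDrop s) (unitNormal tearDrop s) / ‖tearDrop s‖ ^ 2))
          = ‖tearDrop s‖ ^ (1 - β) * (β + 3)) := by
  intro s hs
  have hsin : 0 < sin s := sin_pos_of_mem_Ioo hs
  have hD : 0 < 1 + cos s ^ 2 := by positivity
  have hr : 0 < √(1 + cos s ^ 2) := sqrt_pos.2 hD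
  have hpos : 0 < ‖tearDrop s‖ := by
    rw [norm_tearDrop hsin]
    positivity
  have hne : deriv tearDrop s ≠ 0 := by
    rw [← norm_pos_iff, norm_deriv_tearDrop]
    positivity
  refine ⟨hne, curv_tearDrop hsin, rho_tearDrop hsin, fun β hβ => ?_⟩
  rw [rho_tearDrop hsin, curv_tearDrop hsin]
  have key : ‖tearDrop s‖ ^ (-β) * (3 * ‖tearDrop s‖ - β * -‖tearDrop s‖)
      = ‖tearDrop s‖ ^ (1 - β) * (β + 3) := by
    rw [sub_eq_neg_add 1 β, rpow_add hpos, rpow_one]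
    ring
  rw [key]
  exact ⟨mul_pos (rpow_pos_of_pos hpos _) (by linarith [hβ.1]), rfl⟩
end
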